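/- The series γ₃ := ∑_{k=1}^∞ c(k)/k³ converges and equals 2ζ(3) − ζ(2)·log 4 + (1/6)(log 4)³. -/

import Mathlib

/-! The proof is elementary: a finite version of the identity is proved in closed form, and the
limit is taken by dominated convergence. Put

  `S m N = ∑_{k=1}^N (c k * c (N - k) / c N) / k ^ m`,
  `p i N = ∑_{j=1}^N (1 / (j - 1/2) ^ i - 1 / j ^ i)`.

The partial fraction expansion of `∏_{j ≤ N} (1 + s / (j - 1/2)) / (1 + s / j)` is
`1 + ∑_{k=1}^N (c k * c (N - k) / c N) * s / (s + k)`, so comparing Taylor coefficients at `s = 0`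
gives `S 3 = p 3 / 3 - p 1 * p 2 / 2 + p 1 ^ 3 / 6` (`S_three`). Instead of manipulating rational
functions, the proof uses the recurrence in `N` that they encode,
`S (m+1) (N+1) - S m (N+1) / (N+1) = S (m+1) N - S m N / (N + 1/2)`, which holds term by term
(`S_succ`); it starts from the convolution identity `∑_{k=0}^N c k * c (N - k) = 1` (`conv_c`).

Splitting sums over `1, …, 2N` by parity, `p 1 N = 2 (H_{2N} - H_N) → log 4`, while `p 2 → 2 ζ(2)`
and `p 3 → 6 ζ(3)`. On the other side `c (N - k) / c N → 1` for each fixed `k`, and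
`c k * c (N - k) ≤ c N` dominates the terms of `S 3 N` by `1 / k ^ 3`, so `S 3 N` tends to the
series. -/

/-- `c k = |binom(-1/2, k)| = binom(2k, k) / 4^k`. -/
noncomputable def c (k : ℕ) : ℝ := (Nat.choose (2 * k) k : ℝ) / 4 ^ k

/-- `ζ(n) = ∑_{m=1}^∞ m^{-n}`. -/
noncomputable def zetaVal (n : ℕ) : ℝ := ∑' m : ℕ, 1 / (m + 1 : ℝ) ^ n

open Filter Topology Finset

/-! ### The coefficients `c k` -/

lemma c_pos (k : ℕ) : 0 < c k := by
  unfold c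
  have : 0 < Nat.choose (2 * k) k := Nat.choose_pos (by omega)
  positivity

lemma c_zero : c 0 = 1 := by simp [c]

lemma c_succ (k : ℕ) : c (k + 1) = c k * ((2 * k + 1) / (2 * k + 2)) := by
  have h := Nat.succ_mul_centralBinom_succ k
  unfold Nat.centralBinom at h
  have h' : ((k : ℝ) + 1) * (Nat.choose (2 * (k + 1)) (k + 1) : ℝ)
      = 2 * (2 * k + 1) * (Nat.choose (2 * k) k : ℝ) := by exact_mod_cast h
  unfold c
  rw [pow_succ]
  field_simp
  linarith

/-- Supermultiplicativity: the domination needed for the passage to the limit. -/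
lemma c_mul_le (k m : ℕ) : c k * c m ≤ c (k + m) := by
  induction m with
  | zero => simp [c_zero]
  | succ m ih =>
    rw [← add_assoc, c_succ, c_succ, ← mul_assoc]
    have h : ((2 * m + 1) / (2 * m + 2) : ℝ) ≤ (2 * (k + m : ℕ) + 1) / (2 * (k + m : ℕ) + 2) := by
      rw [div_le_div_iff₀ (by positivity) (by positivity)]
      push_cast
      nlinarith [(Nat.cast_nonneg k : (0 : ℝ) ≤ k)]
    exact mul_le_mul ih h (by positivity) (c_pos _).le

/-! ### Weights and the convolution identity -/

/-- The weight `c k * c (N - k) / c N`, the residue at `s = -k` in the partial fraction expansion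
of `(1 / s) * ∏_{j ≤ N} (1 + s / (j - 1/2)) / (1 + s / j)`. The subtraction is truncated, so only
`k ≤ N` is meaningful. -/
noncomputable def wt (N k : ℕ) : ℝ := c k * c (N - k) / c N

lemma wt_step (N k : ℕ) (hk : k ≤ N) :
    wt (N + 1) k * (1 - k / (N + 1)) = wt N k * (1 - k / (N + 1 / 2)) := by
  obtain ⟨n, rfl⟩ := Nat.exists_eq_add_of_le hk
  have h1 : k + n + 1 - k = n + 1 := by omega
  have h2 : k + n - k = n := by omega
  unfold wt
  rw [h1, h2, c_succ, c_succ]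
  have := (c_pos (k + n)).ne'
  have h3 : (2 * ((k : ℝ) + n) + 1) ≠ 0 := by positivity
  have h4 : ((k : ℝ) + n + 1 / 2) ≠ 0 := by positivity
  push_cast
  field_simp
  ring

lemma conv_c_moment (N : ℕ) :
    ∑ k ∈ range (N + 1), wt N k * k = N / 2 * ∑ k ∈ range (N + 1), wt N k := by
  have h : ∑ k ∈ range (N + 1), wt N k * k = ∑ k ∈ range (N + 1), wt N k * (N - k) := by
    rw [← sum_range_reflect]
    refine sum_congr rfl fun k hk => ?_
    have hk : k ≤ N := by simpa [Nat.lt_succ_iff] using hk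
    have h1 : N + 1 - 1 - k = N - k := by omega
    have h2 : N - (N - k) = k := by omega
    rw [h1, wt, wt, h2, Nat.cast_sub hk]
    ring
  have h2 : ∑ k ∈ range (N + 1), wt N k * (N - k)
      = N * ∑ k ∈ range (N + 1), wt N k - ∑ k ∈ range (N + 1), wt N k * k := by
    rw [mul_sum, ← sum_sub_distrib]
    exact sum_congr rfl fun k _ => by ring
  linarith

/-- The convolution identity `∑_{k=0}^N c k * c (N - k) = 1`, divided by `c N`. It says that the
square of `∑ c k x ^ k = (1 - x) ^ (-1/2)` is the geometric series. -/
lemma conv_c (N : ℕ) : ∑ k ∈ range (N + 1), wt N k = 1 / c N := by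
  induction N with
  | zero => simp [wt, c_zero]
  | succ N ih =>
    have e1 : ∑ k ∈ range (N + 1 + 1), wt (N + 1) k * (1 - k / (N + 1))
        = ∑ k ∈ range (N + 1), wt N k * (1 - k / (N + 1 / 2)) := by
      rw [sum_range_succ]
      have : wt (N + 1) (N + 1) * (1 - ((N + 1 : ℕ) : ℝ) / (N + 1)) = 0 := by
        have : (N + 1 : ℝ) ≠ 0 := by positivity
        push_cast
        rw [div_self this]; ring
      rw [this, add_zero]
      exact sum_congr rfl fun k hk => wt_step N k (by simpa [Nat.lt_succ_iff] using hk)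
    have e2 : ∀ (M : ℕ) (x : ℝ), ∑ k ∈ range (M + 1), wt M k * (1 - k / x)
        = (1 - M / 2 / x) * ∑ k ∈ range (M + 1), wt M k := by
      intro M x
      have : ∑ k ∈ range (M + 1), wt M k * (1 - k / x)
        = ∑ k ∈ range (M + 1), wt M k - (∑ k ∈ range (M + 1), wt M k * k) / x := by
        rw [sum_div, ← sum_sub_distrib]
        exact sum_congr rfl fun k _ => by ring
      rw [this, conv_c_moment]; ring
    rw [e2, e2, ih] at e1
    have hc := (c_pos N).ne'
    have h4 : ((N : ℝ) + 1 / 2) ≠ 0 := by positivity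
    have h5 : (2 * (N : ℝ) + 1) ≠ 0 := by positivity
    have h6 : ((N : ℝ) + 1) ≠ 0 := by positivity
    have h7 : (1 - ((N + 1 : ℕ) : ℝ) / 2 / (N + 1)) = 1 / 2 := by
      push_cast; field_simp; norm_num
    have h8 : (1 - (N : ℝ) / 2 / (N + 1 / 2)) = (N + 1) / (2 * N + 1) := by
      field_simp; ring
    rw [h7, h8] at e1
    have h9 : 1 / c (N + 1) = 2 * ((N + 1) / (2 * N + 1) * (1 / c N)) := by
      rw [c_succ]; field_simp
    rw [h9, ← e1]; ring

/-! ### The finite closed form -/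

/-- The finite weighted sum `∑_{k=1}^N (c k * c (N - k) / c N) / k ^ m`. -/
noncomputable def S (m N : ℕ) : ℝ := ∑ k ∈ range N, wt N (k + 1) / (k + 1 : ℝ) ^ m

lemma S_succ (m N : ℕ) :
    S (m + 1) (N + 1) = S (m + 1) N + S m (N + 1) / (N + 1) - S m N / (N + 1 / 2) := by
  have key : S (m + 1) (N + 1) - S m (N + 1) / (N + 1) = S (m + 1) N - S m N / (N + 1 / 2) := by
    have e : ∀ (M : ℕ) (x : ℝ), S (m + 1) M - S m M / x
        = ∑ k ∈ range M, wt M (k + 1) * (1 - ((k + 1 : ℕ) : ℝ) / x) / (k + 1 : ℝ) ^ (m + 1) := by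
      intro M x
      rw [S, S, sum_div, ← sum_sub_distrib]
      refine sum_congr rfl fun k _ => ?_
      have : (k + 1 : ℝ) ≠ 0 := by positivity
      push_cast
      rw [pow_succ]
      field_simp
    rw [e, e, sum_range_succ]
    have : (1 - ((N + 1 : ℕ) : ℝ) / (N + 1)) = 0 := by
      have : (N + 1 : ℝ) ≠ 0 := by positivity
      push_cast
      rw [div_self this]; ring
    rw [this, mul_zero, zero_div, add_zero]
    refine sum_congr rfl fun k hk => ?_
    rw [wt_step N (k + 1) (by simpa using hk)]
  linarith

lemma S_zero_left (N : ℕ) : S 0 N = 1 / c N - 1 := by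
  have h := conv_c N
  rw [sum_range_succ'] at h
  have h0 : wt N 0 = 1 := by simp [wt, c_zero, (c_pos N).ne']
  simp only [S, pow_zero, div_one]
  linarith

/-- The power sum `∑_{j=1}^N (1 / (j - 1/2) ^ i - 1 / j ^ i)`. -/
noncomputable def p (i N : ℕ) : ℝ :=
  ∑ j ∈ range N, (1 / (j + 1 / 2 : ℝ) ^ i - 1 / (j + 1 : ℝ) ^ i)

lemma p_succ (i N : ℕ) :
    p i (N + 1) = p i N + (1 / (N + 1 / 2 : ℝ) ^ i - 1 / (N + 1 : ℝ) ^ i) := sum_range_succ _ _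

lemma S_one (N : ℕ) : S 1 N = p 1 N := by
  induction N with
  | zero => simp [S, p]
  | succ N ih =>
    rw [S_succ, ih, p_succ, S_zero_left, S_zero_left, c_succ]
    have hc := (c_pos N).ne'
    have h4 : ((N : ℝ) + 1 / 2) ≠ 0 := by positivity
    have h5 : (2 * (N : ℝ) + 1) ≠ 0 := by positivity
    field_simp
    ring

lemma S_two (N : ℕ) : S 2 N = (p 2 N - p 1 N ^ 2) / 2 := by
  induction N with
  | zero => simp [S, p]
  | succ N ih =>
    rw [S_succ, ih, S_one, S_one, p_succ, p_succ]
    simp only [div_eq_mul_inv _ (_ + _ : ℝ), one_div, ← inv_pow]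
    generalize (N + 1 : ℝ)⁻¹ = v
    generalize (N + 2⁻¹ : ℝ)⁻¹ = u
    ring

lemma S_three (N : ℕ) : S 3 N = p 3 N / 3 - p 1 N * p 2 N / 2 + p 1 N ^ 3 / 6 := by
  induction N with
  | zero => simp [S, p]
  | succ N ih =>
    rw [S_succ, ih, S_two, S_two, p_succ, p_succ, p_succ]
    simp only [div_eq_mul_inv _ (_ + _ : ℝ), one_div, ← inv_pow]
    generalize (N + 1 : ℝ)⁻¹ = v
    generalize (N + 2⁻¹ : ℝ)⁻¹ = u
    ring

/-! ### Limits of the power sums -/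

/-- The parity split: odd denominators are all denominators up to `2N` minus the even ones. -/
lemma p_eq (i N : ℕ) : p i N = 2 ^ i * ∑ j ∈ range (2 * N), 1 / (j + 1 : ℝ) ^ i
    - 2 * ∑ j ∈ range N, 1 / (j + 1 : ℝ) ^ i := by
  induction N with
  | zero => simp [p]
  | succ N ih =>
    rw [p_succ, ih, show 2 * (N + 1) = 2 * N + 1 + 1 by ring, sum_range_succ, sum_range_succ,
      sum_range_succ]
    have e1 : (N + 1 / 2 : ℝ) = (2 * N + 1) / 2 := by ring
    have e2 : (((2 * N + 1 : ℕ) : ℝ) + 1) = 2 * (N + 1) := by push_cast; ring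
    rw [e1, e2, div_pow, mul_pow]
    push_cast
    field_simp
    ring

lemma tendsto_two_mul : Tendsto (fun N : ℕ => 2 * N) atTop atTop :=
  tendsto_id.const_mul_atTop' (by norm_num)

lemma summable_zeta (i : ℕ) (hi : 1 < i) : Summable fun m : ℕ => 1 / (m + 1 : ℝ) ^ i := by
  have := (summable_nat_add_iff 1).mpr (Real.summable_one_div_nat_pow.mpr hi)
  simpa using this

lemma tendsto_p (i : ℕ) (hi : 1 < i) :
    Tendsto (p i) atTop (𝓝 (2 ^ i * zetaVal i - 2 * zetaVal i)) := by
  have h : Tendsto (fun N => ∑ j ∈ range N, 1 / (j + 1 : ℝ) ^ i) atTop (𝓝 (zetaVal i)) :=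
    (summable_zeta i hi).hasSum.tendsto_sum_nat
  rw [funext (p_eq i)]
  exact ((h.comp tendsto_two_mul).const_mul _).sub (h.const_mul _)

lemma tendsto_p_one : Tendsto (p 1) atTop (𝓝 (Real.log 4)) := by
  have h := Real.tendsto_harmonic_sub_log
  -- The Euler–Mascheroni constants of `H_{2N} - log (2N)` and `H_N - log N` cancel.
  have h2 := (((h.comp tendsto_two_mul).sub h).const_mul 2).add_const (2 * Real.log 2)
  have e4 : Real.log 4 = 2 * Real.log 2 := by
    rw [show (4 : ℝ) = 2 ^ 2 by norm_num, Real.log_pow]; norm_num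
  rw [sub_self, mul_zero, zero_add, ← e4] at h2
  refine h2.congr' ?_
  filter_upwards [eventually_gt_atTop 0] with N hN
  have hN' : (N : ℝ) ≠ 0 := by positivity
  rw [p_eq]
  simp only [Function.comp, harmonic]
  push_cast
  rw [Real.log_mul (by norm_num) hN', e4]
  simp only [pow_one, one_div]
  ring

/-! ### Limit of the weighted sums -/

lemma tendsto_c_succ_div : Tendsto (fun N => c (N + 1) / c N) atTop (𝓝 1) := by
  have h : Tendsto (fun N : ℕ => 1 - (1 / 2) * (1 / ((N : ℝ) + 1))) atTop (𝓝 (1 - (1 / 2) * 0)) :=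
    (tendsto_one_div_add_atTop_nhds_zero_nat.const_mul _).const_sub _
  rw [mul_zero, sub_zero] at h
  refine h.congr fun N => ?_
  rw [c_succ]
  have := (c_pos N).ne'
  field_simp
  ring

lemma tendsto_c_add_div (k : ℕ) : Tendsto (fun N => c N / c (N + k)) atTop (𝓝 1) := by
  induction k with
  | zero => simp [(c_pos _).ne']
  | succ k ih =>
    have h := ih.div (tendsto_c_succ_div.comp (tendsto_add_atTop_nat k)) one_ne_zero
    rw [div_one] at h
    refine h.congr fun N => ?_
    have h1 := (c_pos (N + k)).ne'
    have h2 := (c_pos (N + k + 1)).ne'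
    simp only [Pi.div_apply, Function.comp, ← add_assoc]
    field_simp

lemma tendsto_wt (k : ℕ) : Tendsto (fun N => wt N k) atTop (𝓝 (c k)) := by
  rw [← tendsto_add_atTop_iff_nat k]
  have h := (tendsto_c_add_div k).const_mul (c k)
  rw [mul_one] at h
  refine h.congr fun N => ?_
  simp [wt, mul_div_assoc]

lemma wt_nonneg (N k : ℕ) : 0 ≤ wt N k :=
  div_nonneg (mul_nonneg (c_pos _).le (c_pos _).le) (c_pos _).le

lemma wt_le_one (N k : ℕ) (hk : k ≤ N) : wt N k ≤ 1 := by
  rw [wt, div_le_one (c_pos _)]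
  simpa [hk] using c_mul_le k (N - k)

lemma c_le_one (k : ℕ) : c k ≤ 1 :=
  le_of_tendsto (tendsto_wt k) ((eventually_ge_atTop k).mono fun N hN => wt_le_one N k hN)

lemma tendsto_S_three :
    Tendsto (S 3) atTop (𝓝 (∑' k : ℕ, c (k + 1) / (k + 1 : ℝ) ^ 3)) := by
  have h := tendsto_tsum_of_dominated_convergence (𝓕 := atTop)
    (f := fun N k : ℕ => if k < N then wt N (k + 1) / (k + 1 : ℝ) ^ 3 else 0)
    (g := fun k : ℕ => c (k + 1) / (k + 1 : ℝ) ^ 3)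
    (summable_zeta 3 (by norm_num)) ?_ ?_
  · refine h.congr fun N => ?_
    rw [tsum_eq_sum (s := range N) (fun k hk => if_neg (by simpa using hk)), S]
    exact sum_congr rfl fun k hk => if_pos (by simpa using hk)
  · intro k
    refine ((tendsto_wt (k + 1)).div_const _).congr' ?_
    filter_upwards [eventually_gt_atTop k] with N hN
    rw [if_pos hN]
  · refine Eventually.of_forall fun N k => ?_
    split_ifs with hk
    · rw [Real.norm_of_nonneg (div_nonneg (wt_nonneg _ _) (by positivity))]
      gcongr
      exact wt_le_one N (k + 1) hk
    · rw [norm_zero]; positivity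

/-- The series `γ₃ = ∑_{k=1}^∞ c(k)/k³` converges and equals
`2ζ(3) - ζ(2)·log 4 + (1/6)(log 4)³`. -/
theorem gamma_three :
    HasSum (fun k : ℕ => c (k + 1) / (k + 1 : ℝ) ^ 3)
      (2 * zetaVal 3 - zetaVal 2 * Real.log 4 + (1 / 6) * (Real.log 4) ^ 3) := by
  have hs : Summable fun k : ℕ => c (k + 1) / (k + 1 : ℝ) ^ 3 := by
    refine Summable.of_nonneg_of_le (fun k => div_nonneg (c_pos _).le (by positivity))
      (fun k => ?_) (summable_zeta 3 (by norm_num))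
    gcongr
    exact c_le_one _
  have h3 := tendsto_p 3 (by norm_num)
  have h2 := tendsto_p 2 (by norm_num)
  have h1 := tendsto_p_one
  have h := ((h3.div_const 3).sub ((h1.mul h2).div_const 2)).add ((h1.pow 3).div_const 6)
  have e := tendsto_nhds_unique tendsto_S_three (h.congr fun N => (S_three N).symm)
  convert hs.hasSum using 1
  rw [e]
  ring
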